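/- arXiv:2412.06628 — 8 statements merged into one kernel-verified Lean document; each statement's English description precedes it below -/
import Mathlib

section
/- Let σ_y > 0, σ_{s1} > 0 and β_{01} ≠ 0 be real numbers and let ρ* ∈ [−1, 1]. Define v(ρ) = σ_y² + (1 − ρ²)β_{01}²σ_{s1}² and g(ρ) = −(1/2)·[ log v(ρ) + ( β_{01}²σ_{s1}²(ρ − ρ*)² + v(ρ*) ) / v(ρ) ] for ρ ∈ [−1, 1]. Then g is strictly increasing on [−1, ρ*) and strictly decreasing on (ρ*, 1]; in particular ρ* is the unique maximizer of g over [−1, 1]. -/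
/-!
Let `V r = a + c (1 - r²)` be the residual variance at correlation `r`. The expected log-likelihood
of `r` under the true correlation `s` has derivative `c (s - r) (V r + 2 c r²) / V r²`, which has
the sign of `s - r` wherever `V` is positive. Since `V` is concave, it is positive on an interval,
so the sign of the derivative decides monotonicity on either side of `s`. The two sides are
exchanged by the symmetry `(s, r) ↦ (-s, -r)`.
-/

open Set

/-- The conditional variance of the control outcome given `S(0)` when the principal strata have
correlation `r`. The parameters are `a = σ_y²` and `c = β₀₁² σ_{s1}²`. -/
noncomputable def residualVariance (a c r : ℝ) : ℝ :=
  a + c * (1 - r ^ 2)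

/-- The expected control-arm log-likelihood of the correlation `r` under the true correlation `s`,
up to an additive constant. The numerator `c (r - s)² + V s`, with `V` the residual variance, is the
expected squared residual: using `r` in place of `s` shifts the predicted mean by
`β₀₁ σ_{s1} (r - s)` times the standardized `S(0)`. -/
noncomputable def expectedLogLikelihood (a c s r : ℝ) : ℝ :=
  -(1 / 2) * (Real.log (residualVariance a c r) +
    (c * (r - s) ^ 2 + residualVariance a c s) / residualVariance a c r)

section

variable {a c s r : ℝ}

lemma residualVariance_neg (a c r : ℝ) : residualVariance a c (-r) = residualVariance a c r := by
  simp only [residualVariance, neg_sq]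

lemma residualVariance_pos (ha : 0 < a) (hc : 0 ≤ c) (hr : r ∈ Icc (-1 : ℝ) 1) :
    0 < residualVariance a c r := by
  have hr_sq : r ^ 2 ≤ 1 := (sq_le_one_iff_abs_le_one r).2 (abs_le.2 hr)
  exact add_pos_of_pos_of_nonneg ha (mul_nonneg hc (sub_nonneg.2 hr_sq))

lemma hasDerivAt_residualVariance (a c r : ℝ) :
    HasDerivAt (residualVariance a c) (-(2 * c * r)) r := by
  refine ((((hasDerivAt_pow 2 r).const_sub 1).const_mul c).const_add a).congr_deriv ?_
  push_cast
  ring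

lemma concaveOn_residualVariance (a : ℝ) (hc : 0 ≤ c) :
    ConcaveOn ℝ univ (residualVariance a c) :=
  (concaveOn_const a convex_univ).add
    (((concaveOn_const 1 convex_univ).sub even_two.convexOn_pow).smul hc)

lemma convex_residualVariance_pos (a : ℝ) (hc : 0 ≤ c) :
    Convex ℝ {r | 0 < residualVariance a c r} := by
  simpa only [mem_univ, true_and] using (concaveOn_residualVariance a hc).convex_gt 0

lemma expectedLogLikelihood_neg_neg (a c s r : ℝ) :
    expectedLogLikelihood a c (-s) (-r) = expectedLogLikelihood a c s r := by
  have hsq : (-r - -s) ^ 2 = (r - s) ^ 2 := by ring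
  simp only [expectedLogLikelihood, residualVariance_neg, hsq]

lemma hasDerivAt_expectedLogLikelihood (s : ℝ) (hr : residualVariance a c r ≠ 0) :
    HasDerivAt (expectedLogLikelihood a c s)
      (c * (s - r) * (residualVariance a c r + 2 * c * r ^ 2) / residualVariance a c r ^ 2) r := by
  have hvar := hasDerivAt_residualVariance a c r
  have hres : HasDerivAt (fun x => c * (x - s) ^ 2 + residualVariance a c s)
      (c * (2 * (r - s))) r := by
    simpa using ((((hasDerivAt_id r).sub_const s).pow 2).const_mul c).add_const
      (residualVariance a c s)
  refine (((hvar.log hr).add (hres.div hvar hr)).const_mul (-(1 / 2))).congr_deriv ?_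
  field_simp
  simp only [residualVariance]
  ring

lemma strictMonoOn_expectedLogLikelihood (a s : ℝ) (hc : 0 < c) :
    StrictMonoOn (expectedLogLikelihood a c s) ({r | 0 < residualVariance a c r} ∩ Iic s) := by
  refine strictMonoOn_of_deriv_pos ((convex_residualVariance_pos a hc.le).inter (convex_Iic s))
    (fun r hr =>
      (hasDerivAt_expectedLogLikelihood s hr.1.ne').continuousAt.continuousWithinAt)
    fun r hr => ?_
  have hvar : 0 < residualVariance a c r := (interior_subset hr).1
  have hrs : r < s := by
    rw [interior_inter, interior_Iic] at hr
    exact hr.2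
  rw [(hasDerivAt_expectedLogLikelihood s hvar.ne').deriv]
  have := sub_pos.2 hrs
  positivity

lemma strictAntiOn_expectedLogLikelihood (a s : ℝ) (hc : 0 < c) :
    StrictAntiOn (expectedLogLikelihood a c s) ({r | 0 < residualVariance a c r} ∩ Ici s) := by
  have neg_mem : ∀ r ∈ {r | 0 < residualVariance a c r} ∩ Ici s,
      -r ∈ {r | 0 < residualVariance a c r} ∩ Iic (-s) := fun r hr =>
    ⟨hr.1.trans_eq (residualVariance_neg a c r).symm, mem_Iic.2 (neg_le_neg hr.2)⟩
  intro x hx y hy hxy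
  rw [← expectedLogLikelihood_neg_neg a c s x, ← expectedLogLikelihood_neg_neg a c s y]
  exact strictMonoOn_expectedLogLikelihood a (-s) hc (neg_mem y hy) (neg_mem x hx)
    (neg_lt_neg hxy)

lemma expectedLogLikelihood_lt_self (hc : 0 < c) (hr : 0 < residualVariance a c r)
    (hs : 0 < residualVariance a c s) (hrs : r ≠ s) :
    expectedLogLikelihood a c s r < expectedLogLikelihood a c s s := by
  rcases hrs.lt_or_gt with hlt | hgt
  · exact strictMonoOn_expectedLogLikelihood a s hc ⟨hr, hlt.le⟩ ⟨hs, self_mem_Iic⟩ hlt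
  · exact strictAntiOn_expectedLogLikelihood a s hc ⟨hs, self_mem_Ici⟩ ⟨hr, hgt.le⟩ hgt

end

/-- The expected per-observation log-likelihood `g` of the principal-strata
correlation `ρ` in the control arm is strictly increasing on `[-1, ρ*)`, strictly decreasing
on `(ρ*, 1]`, and uniquely maximized over `[-1, 1]` at the true correlation `ρ*`. -/
theorem stmt0 (σy σs1 β01 ρstar : ℝ) (hσy : 0 < σy) (hσs1 : 0 < σs1) (hβ : β01 ≠ 0)
    (hρstar : ρstar ∈ Set.Icc (-1 : ℝ) 1)
    (v g : ℝ → ℝ)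
    (hv : ∀ ρ, v ρ = σy ^ 2 + (1 - ρ ^ 2) * β01 ^ 2 * σs1 ^ 2)
    (hg : ∀ ρ, g ρ = -(1 / 2) *
      (Real.log (v ρ) + (β01 ^ 2 * σs1 ^ 2 * (ρ - ρstar) ^ 2 + v ρstar) / v ρ)) :
    StrictMonoOn g (Set.Ico (-1 : ℝ) ρstar) ∧
    StrictAntiOn g (Set.Ioc ρstar (1 : ℝ)) ∧
    ∀ ρ ∈ Set.Icc (-1 : ℝ) 1, ρ ≠ ρstar → g ρ < g ρstar := by
  have hc : 0 < β01 ^ 2 * σs1 ^ 2 := by positivity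
  have hvar : v = residualVariance (σy ^ 2) (β01 ^ 2 * σs1 ^ 2) := by
    funext ρ
    rw [hv, residualVariance]
    ring
  have hlik : g = expectedLogLikelihood (σy ^ 2) (β01 ^ 2 * σs1 ^ 2) ρstar := by
    funext ρ
    rw [hg, hvar, expectedLogLikelihood]
  have hpos : ∀ ρ ∈ Set.Icc (-1 : ℝ) 1,
      0 < residualVariance (σy ^ 2) (β01 ^ 2 * σs1 ^ 2) ρ := fun _ hρ =>
    residualVariance_pos (pow_pos hσy 2) hc.le hρ
  rw [hlik]
  refine ⟨?_, ?_, fun ρ hρ hne =>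
    expectedLogLikelihood_lt_self hc (hpos ρ hρ) (hpos ρstar hρstar) hne⟩
  · exact (strictMonoOn_expectedLogLikelihood _ _ hc).mono fun ρ hρ =>
      ⟨hpos ρ ⟨hρ.1, hρ.2.le.trans hρstar.2⟩, hρ.2.le⟩
  · exact (strictAntiOn_expectedLogLikelihood _ _ hc).mono fun ρ hρ =>
      ⟨hpos ρ ⟨hρstar.1.trans hρ.1.le, hρ.2⟩, hρ.1.le⟩
end

section
/- Let σ_y > 0, σ_{s1} > 0 and β_{01} ≠ 0 be real numbers and let ρ* ∈ (−1, 1). Define v(ρ) = σ_y² + (1 − ρ²)β_{01}²σ_{s1}² and g(ρ) = −(1/2)·[ log v(ρ) + ( β_{01}²σ_{s1}²(ρ − ρ*)² + v(ρ*) ) / v(ρ) ]. Then g is twice differentiable at ρ* and g''(ρ*) = −β_{01}²σ_{s1}²·( 1/v(ρ*) + 2ρ*²β_{01}²σ_{s1}²/v(ρ*)² ); that is, the per-observation Fisher information for ρ at ρ* in the control arm equals β_{01}²σ_{s1}²·{ 2ρ*²β_{01}²σ_{s1}²/(ζ_0 − ψ_0²)² + 1/(ζ_0 − ψ_0²) },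 where ζ_0 − ψ_0² = v(ρ*). -/
/-! Given the standardised stratum variable `Z`, the control-arm outcome is, up to a shift
free of `ρ`, `N(m(ρ) Z, v(ρ))` with `m(ρ) = β01 σs1 ρ`. For any Gaussian regression of this form,
the derivative of the expected log-likelihood is a sum of two products, with first factors
`-(m(θ) - m(θ₀))` and `(m(θ) - m(θ₀))² + v(θ₀) - v(θ)`. Both vanish at `θ₀`, so the second
derivative there only involves the derivatives of these first factors, and the information is
`m'² / v + v'² / (2 v²)`. -/

open Filter Topology

theorem hasDerivAt_mul_of_eq_zero {𝕜 𝔸 : Type*} [NontriviallyNormedField 𝕜] [NormedRing 𝔸]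
    [NormedAlgebra 𝕜 𝔸] {f k : 𝕜 → 𝔸} {f' : 𝔸} {x : 𝕜}
    (hf : HasDerivAt f f' x) (hfx : f x = 0) (hk : ContinuousAt k x) :
    HasDerivAt (fun y => f y * k y) (f' * k x) x := by
  rw [hasDerivAt_iff_tendsto_slope] at hf ⊢
  refine (hf.mul (hk.tendsto.mono_left nhdsWithin_le_nhds)).congr fun y => ?_
  simp only [slope, hfx, vsub_eq_sub, sub_zero, zero_mul, smul_mul_assoc]

theorem hasDerivAt_sub_const_sq_add_const {𝕜 : Type*} [NontriviallyNormedField 𝕜] {f : 𝕜 → 𝕜}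
    {f' x : 𝕜} (hf : HasDerivAt f f' x) (a c : 𝕜) :
    HasDerivAt (fun y => (f y - a) ^ 2 + c) (2 * (f x - a) * f') x := by
  simpa using ((hf.sub_const a).fun_pow 2).add_const c

section GaussianRegression

/-- The expected log-likelihood at `θ`, up to an additive constant, of the Gaussian regression
`Y ∣ Z ~ N(m(θ) Z, v(θ))` when the true parameter is `θ₀`. The covariate is standardised,
`𝔼[Z²] = 1`, so that `𝔼[(Y - m(θ) Z)²] = (m(θ) - m(θ₀))² + v(θ₀)`. -/
noncomputable def gaussianExpectedLogLik (m v : ℝ → ℝ) (θ₀ θ : ℝ) : ℝ :=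
  -(1 / 2) * (Real.log (v θ) + ((m θ - m θ₀) ^ 2 + v θ₀) / v θ)

/-- The expected score at `θ` of the Gaussian regression `Y ∣ Z ~ N(m(θ) Z, v(θ))` when the true
parameter is `θ₀`; the functions `m'` and `v'` stand for the derivatives of `m` and `v`. It is
arranged so that the first factor of each product vanishes at `θ₀`. -/
noncomputable def gaussianExpectedScore (m v m' v' : ℝ → ℝ) (θ₀ θ : ℝ) : ℝ :=
  -(m θ - m θ₀) * (m' θ / v θ) + ((m θ - m θ₀) ^ 2 + v θ₀ - v θ) * (v' θ / (2 * v θ ^ 2))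

variable {m v m' v' : ℝ → ℝ} {θ₀ : ℝ}

theorem gaussianExpectedScore_self : gaussianExpectedScore m v m' v' θ₀ θ₀ = 0 := by
  simp [gaussianExpectedScore]

theorem hasDerivAt_gaussianExpectedLogLik {θ : ℝ} (hm : HasDerivAt m (m' θ) θ)
    (hv : HasDerivAt v (v' θ) θ) (hvθ : v θ ≠ 0) :
    HasDerivAt (gaussianExpectedLogLik m v θ₀) (gaussianExpectedScore m v m' v' θ₀ θ) θ := by
  have h_sq := hasDerivAt_sub_const_sq_add_const hm (m θ₀) (v θ₀)
  refine (((hv.log hvθ).add (h_sq.div hv hvθ)).const_mul (-(1 / 2))).congr_deriv ?_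
  rw [gaussianExpectedScore]
  field_simp
  ring

theorem hasDerivAt_gaussianExpectedScore_self (hm : HasDerivAt m (m' θ₀) θ₀)
    (hv : HasDerivAt v (v' θ₀) θ₀) (hm' : ContinuousAt m' θ₀) (hv' : ContinuousAt v' θ₀)
    (hv₀ : v θ₀ ≠ 0) :
    HasDerivAt (gaussianExpectedScore m v m' v' θ₀)
      (-(m' θ₀ ^ 2 / v θ₀ + v' θ₀ ^ 2 / (2 * v θ₀ ^ 2))) θ₀ := by
  have h_mean : HasDerivAt (fun θ => -(m θ - m θ₀) * (m' θ / v θ))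
      (-m' θ₀ * (m' θ₀ / v θ₀)) θ₀ :=
    hasDerivAt_mul_of_eq_zero (hm.sub_const (m θ₀)).fun_neg (by simp)
      (hm'.div hv.continuousAt hv₀)
  have h_excess : HasDerivAt (fun θ => (m θ - m θ₀) ^ 2 + v θ₀ - v θ) (-v' θ₀) θ₀ := by
    simpa using (hasDerivAt_sub_const_sq_add_const hm (m θ₀) (v θ₀)).fun_sub hv
  have h_var : HasDerivAt
      (fun θ => ((m θ - m θ₀) ^ 2 + v θ₀ - v θ) * (v' θ / (2 * v θ ^ 2)))
      (-v' θ₀ * (v' θ₀ / (2 * v θ₀ ^ 2))) θ₀ :=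
    hasDerivAt_mul_of_eq_zero h_excess (by simp)
      (hv'.div (continuousAt_const.mul (hv.continuousAt.pow 2)) (by positivity))
  exact (h_mean.add h_var).congr_deriv (by ring)

theorem stmt1_general (hm : ∀ᶠ θ in 𝓝 θ₀, HasDerivAt m (m' θ) θ)
    (hv : ∀ᶠ θ in 𝓝 θ₀, HasDerivAt v (v' θ) θ) (hm' : ContinuousAt m' θ₀)
    (hv' : ContinuousAt v' θ₀) (hv₀ : 0 < v θ₀) :
    HasDerivAt (gaussianExpectedLogLik m v θ₀) 0 θ₀ ∧
      HasDerivAt (deriv (gaussianExpectedLogLik m v θ₀))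
        (-(m' θ₀ ^ 2 / v θ₀ + v' θ₀ ^ 2 / (2 * v θ₀ ^ 2))) θ₀ := by
  have h_score : ∀ᶠ θ in 𝓝 θ₀, HasDerivAt (gaussianExpectedLogLik m v θ₀)
      (gaussianExpectedScore m v m' v' θ₀ θ) θ := by
    filter_upwards [hm, hv, hv.self_of_nhds.continuousAt.eventually_ne hv₀.ne'] with θ hmθ hvθ hθ
    exact hasDerivAt_gaussianExpectedLogLik hmθ hvθ hθ
  constructor
  · simpa only [gaussianExpectedScore_self] using h_score.self_of_nhds
  · exact (hasDerivAt_gaussianExpectedScore_self hm.self_of_nhds hv.self_of_nhds hm' hv'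
      hv₀.ne').congr_of_eventuallyEq (h_score.mono fun _ h => h.deriv)

end GaussianRegression

section ControlArm

/-- The conditional variance of the control-arm outcome given `S(0)`, as a function of the
correlation `ρ` of the principal strata; the paper's `ζ₀ - ψ₀²`. -/
def controlVariance (σy σs1 β01 ρ : ℝ) : ℝ :=
  σy ^ 2 + (1 - ρ ^ 2) * β01 ^ 2 * σs1 ^ 2

variable {σy σs1 β01 ρ : ℝ}

theorem controlVariance_pos (hσy : σy ≠ 0) (hρ : |ρ| ≤ 1) :
    0 < controlVariance σy σs1 β01 ρ := by
  have hρ_sq : 0 ≤ 1 - ρ ^ 2 := sub_nonneg.2 ((sq_le_one_iff_abs_le_one ρ).2 hρ)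
  rw [controlVariance]
  positivity

theorem hasDerivAt_controlVariance :
    HasDerivAt (controlVariance σy σs1 β01) (-(2 * ρ) * β01 ^ 2 * σs1 ^ 2) ρ := by
  have h_compl : HasDerivAt (fun ρ : ℝ => 1 - ρ ^ 2) (-(2 * ρ)) ρ := by
    simpa using (hasDerivAt_pow 2 ρ).const_sub 1
  exact ((h_compl.mul_const (β01 ^ 2)).mul_const (σs1 ^ 2)).const_add (σy ^ 2)

end ControlArm

/-- The expected per-observation control-arm log-likelihood `g` of the
principal-strata correlation is twice differentiable at the true value `ρ*` with
`g''(ρ*) = -β01²σs1²·(1/v(ρ*) + 2ρ*²β01²σs1²/v(ρ*)²)`; equivalently, the per-observation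
Fisher information `-g''(ρ*)` equals
`β01²σs1²·(2ρ*²β01²σs1²/(ζ0-ψ0²)² + 1/(ζ0-ψ0²))` with `ζ0 - ψ0² = v(ρ*)`. -/
theorem stmt1 (σy σs1 β01 ρstar : ℝ) (hσy : 0 < σy) (hσs1 : 0 < σs1) (hβ : β01 ≠ 0)
    (hρstar : ρstar ∈ Set.Ioo (-1 : ℝ) 1)
    (v g : ℝ → ℝ)
    (hv : ∀ ρ, v ρ = σy ^ 2 + (1 - ρ ^ 2) * β01 ^ 2 * σs1 ^ 2)
    (hg : ∀ ρ, g ρ = -(1 / 2) *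
      (Real.log (v ρ) + (β01 ^ 2 * σs1 ^ 2 * (ρ - ρstar) ^ 2 + v ρstar) / v ρ)) :
    DifferentiableAt ℝ g ρstar ∧ DifferentiableAt ℝ (deriv g) ρstar ∧
    deriv (deriv g) ρstar =
      -(β01 ^ 2 * σs1 ^ 2 *
        (1 / v ρstar + 2 * ρstar ^ 2 * β01 ^ 2 * σs1 ^ 2 / (v ρstar) ^ 2)) ∧
    -(deriv (deriv g) ρstar) =
      β01 ^ 2 * σs1 ^ 2 *
        (2 * ρstar ^ 2 * β01 ^ 2 * σs1 ^ 2 / (v ρstar) ^ 2 + 1 / v ρstar) := by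
  obtain rfl : v = controlVariance σy σs1 β01 := funext hv
  obtain rfl : g = gaussianExpectedLogLik (fun ρ => β01 * σs1 * ρ)
      (controlVariance σy σs1 β01) ρstar := by
    funext ρ
    rw [hg, gaussianExpectedLogLik]
    ring
  obtain ⟨h_loglik, h_score⟩ := stmt1_general
    (.of_forall fun ρ => hasDerivAt_const_mul (x := ρ) (β01 * σs1))
    (.of_forall fun ρ => hasDerivAt_controlVariance) continuousAt_const (by fun_prop)
    (controlVariance_pos hσy.ne' (abs_lt.2 hρstar).le)
  refine ⟨h_loglik.differentiableAt, h_score.differentiableAt, ?_, ?_⟩ <;>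
    rw [h_score.deriv] <;> ring
end

section
/- Let σ_{s0} > 0, σ_{s1} > 0, ρ ∈ (−1, 1), and let V_0, V_1 be real numbers with 0 < V_0 ≤ V_1. Define S = { (b_{01}, b_{10}) ∈ ℝ² : there exists σ² ≥ 0 with (1 − ρ²)σ_{s1}² b_{01}² = V_0 − σ² and (1 − ρ²)σ_{s0}² b_{10}² = V_1 − σ² }. Then S = { (b_{01}, b_{10}) ∈ ℝ² : b_{01}² ≤ V_0 / ((1 − ρ²)σ_{s1}²), (V_1 − V_0)/((1 − ρ²)σ_{s0}²) ≤ b_{10}² ≤ V_1/((1 − ρ²)σ_{s0}²), and σ_{s0}²b_{10}² − σ_{s1}²b_{01}² = (V_1 − V_0)/(1 − ρ²) }. In particular, the set of possible values of b_{01} is the interval [−√(V_0/((1−ρ²)σ_{s1}²)), √(V_0/((1−ρ²)σ_{s1}²))] and the set of possible values of b_{10} is the union [−√(V_1/((1−ρ²)σ_{s0}²)), −√((V_1−V_0)/((1−ρ²)σ_{s0}²))] ∪ [√((V_1−V_0)/((1−ρ²)σ_{s0}²)), √(V_1/((1−ρ²)σ_{s0}²))]. -/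
/-!
With `x = β₀₁`, `y = β₁₀`, `a = (1 - ρ²)σ_{s1}²` and `b = (1 - ρ²)σ_{s0}²`, eliminating the free
residual variance `σ² = V₀ - a x²` from the two variance equations leaves the inequality
`a x² ≤ V₀` and the equation `b y² - a x² = V₁ - V₀`. A value of `y` extends to a solution exactly
when the value of `a x²` that it forces lies in `[0, V₀]`, that is, when `V₁ - V₀ ≤ b y² ≤ V₁`.
The same holds with the roles of `x` and `y` exchanged, but then the lower bound `V₀ - V₁` is at
most `0`, so the two intervals of values of `x` merge into one.
-/

open Set

section Squares

variable {a p q : ℝ}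

theorem exists_mul_sq_eq_iff (ha : 0 < a) : (∃ x : ℝ, a * x ^ 2 = p) ↔ 0 ≤ p := by
  constructor
  · rintro ⟨x, rfl⟩
    positivity
  · intro hp
    exact ⟨√(p / a), by rw [Real.sq_sqrt (by positivity), mul_div_cancel₀ p ha.ne']⟩

theorem setOf_mul_sq_le (ha : 0 < a) (hq : 0 ≤ q) :
    {x : ℝ | a * x ^ 2 ≤ q} = Icc (-√(q / a)) √(q / a) := by
  ext x
  rw [mem_ofPred_eq, ← le_div_iff₀' ha, Real.sq_le (by positivity), mem_Icc]

-- If `p < 0` the junk value `√(p / a) = 0` makes the two half-lines cover `ℝ`, as they should.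
theorem setOf_le_mul_sq (ha : 0 < a) :
    {x : ℝ | p ≤ a * x ^ 2} = Iic (-√(p / a)) ∪ Ici √(p / a) := by
  ext x
  rw [mem_ofPred_eq, ← div_le_iff₀' ha, ← sq_abs, ← Real.sqrt_le_left (abs_nonneg x), le_abs',
    mem_union, mem_Iic, mem_Ici]

theorem setOf_le_mul_sq_and_mul_sq_le (ha : 0 < a) (hq : 0 ≤ q) :
    {x : ℝ | p ≤ a * x ^ 2 ∧ a * x ^ 2 ≤ q} =
      Icc (-√(q / a)) (-√(p / a)) ∪ Icc √(p / a) √(q / a) := by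
  have hp_root : -√(p / a) ≤ √(q / a) := by
    linarith [Real.sqrt_nonneg (p / a), Real.sqrt_nonneg (q / a)]
  have negative_part :
      Iic (-√(p / a)) ∩ Icc (-√(q / a)) √(q / a) = Icc (-√(q / a)) (-√(p / a)) := by
    rw [← Ici_inter_Iic, inter_left_comm, Iic_inter_Iic, inf_eq_left.2 hp_root, Ici_inter_Iic]
  have positive_part :
      Ici √(p / a) ∩ Icc (-√(q / a)) √(q / a) = Icc √(p / a) √(q / a) := by
    rw [← Ici_inter_Iic, ← inter_assoc, Ici_inter_Ici, sup_eq_left.2 (neg_le.1 hp_root),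
      Ici_inter_Iic]
  rw [ofPred_and, setOf_le_mul_sq ha, setOf_mul_sq_le ha hq, union_inter_distrib_right,
    negative_part, positive_part]

end Squares

/-- The partial identification region of the principal-ignorability-violation coefficients
`(β₀₁, β₁₀)`: the pairs compatible with the conditional variances `v = V₀` and `w = V₁` for some
residual variance `s = σ_y² ≥ 0`. The coefficients `a` and `b` stand for `(1 - ρ²)σ_{s1}²` and
`(1 - ρ²)σ_{s0}²`, the only form in which `ρ`, `σ_{s1}` and `σ_{s0}` enter. -/
def identificationRegion (a b v w : ℝ) : Set (ℝ × ℝ) :=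
  {β | ∃ s : ℝ, 0 ≤ s ∧ a * β.1 ^ 2 = v - s ∧ b * β.2 ^ 2 = w - s}

section IdentificationRegion

variable {a b v w x y : ℝ}

theorem mk_mem_identificationRegion_iff :
    (x, y) ∈ identificationRegion a b v w ↔
      a * x ^ 2 ≤ v ∧ b * y ^ 2 - a * x ^ 2 = w - v := by
  constructor
  · rintro ⟨s, hs, hx, hy⟩
    exact ⟨by linarith, by linarith⟩
  · rintro ⟨hx, hxy⟩
    exact ⟨v - a * x ^ 2, by linarith, by ring, by linarith⟩

theorem mk_mem_identificationRegion_comm :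
    (x, y) ∈ identificationRegion a b v w ↔ (y, x) ∈ identificationRegion b a w v :=
  exists_congr fun _ ↦ and_congr_right fun _ ↦ and_comm

theorem exists_mk_mem_identificationRegion_iff (ha : 0 < a) :
    (∃ x, (x, y) ∈ identificationRegion a b v w) ↔ w - v ≤ b * y ^ 2 ∧ b * y ^ 2 ≤ w := by
  calc (∃ x, (x, y) ∈ identificationRegion a b v w)
      ↔ b * y ^ 2 ≤ w ∧ ∃ x, a * x ^ 2 = v - w + b * y ^ 2 := by
        simp only [mk_mem_identificationRegion_comm (a := a), mk_mem_identificationRegion_iff,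
          sub_eq_iff_eq_add, exists_and_left]
    _ ↔ b * y ^ 2 ≤ w ∧ 0 ≤ v - w + b * y ^ 2 := by rw [exists_mul_sq_eq_iff ha]
    _ ↔ w - v ≤ b * y ^ 2 ∧ b * y ^ 2 ≤ w := by
        rw [and_comm, ← neg_sub w v, neg_add_eq_sub, sub_nonneg]

theorem setOf_exists_mk_mem_identificationRegion_right (ha : 0 < a) (hb : 0 < b) (hw : 0 ≤ w) :
    {y | ∃ x, (x, y) ∈ identificationRegion a b v w} =
      Icc (-√(w / b)) (-√((w - v) / b)) ∪ Icc √((w - v) / b) √(w / b) := by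
  simp only [exists_mk_mem_identificationRegion_iff ha, setOf_le_mul_sq_and_mul_sq_le hb hw]

theorem setOf_exists_mk_mem_identificationRegion_left (ha : 0 < a) (hb : 0 < b) (hv : 0 ≤ v)
    (hvw : v ≤ w) :
    {x | ∃ y, (x, y) ∈ identificationRegion a b v w} = Icc (-√(v / a)) √(v / a) := by
  have lower_bound (x : ℝ) : v - w ≤ a * x ^ 2 := (sub_nonpos.2 hvw).trans (by positivity)
  simp only [mk_mem_identificationRegion_comm (a := a), exists_mk_mem_identificationRegion_iff hb,
    lower_bound, true_and, setOf_mul_sq_le ha hv]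

theorem identificationRegion_mul_mul {c s t : ℝ} (hc : 0 < c) (hs : 0 < s) (ht : 0 < t) :
    identificationRegion (c * s) (c * t) v w =
      {β | β.1 ^ 2 ≤ v / (c * s) ∧ (w - v) / (c * t) ≤ β.2 ^ 2 ∧ β.2 ^ 2 ≤ w / (c * t) ∧
        t * β.2 ^ 2 - s * β.1 ^ 2 = (w - v) / c} := by
  have hcs : 0 < c * s := mul_pos hc hs
  have hct : 0 < c * t := mul_pos hc ht
  ext ⟨x, y⟩
  rw [mk_mem_identificationRegion_iff, mem_ofPred_eq, le_div_iff₀' hcs, div_le_iff₀' hct,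
    le_div_iff₀' hct, eq_div_iff_mul_eq hc.ne']
  have hx_nonneg : 0 ≤ c * s * x ^ 2 := by positivity
  constructor
  · rintro ⟨hx, hxy⟩
    exact ⟨hx, by linarith, by linarith, by linarith⟩
  · rintro ⟨hx, -, -, hxy⟩
    exact ⟨hx, by linarith⟩

end IdentificationRegion

/-- Proposition 1: the partial identification region of `(β01, β10)` with
known `ρ`, without further assumptions, together with the resulting regions for each
coordinate separately. -/
theorem stmt5 (σs0 σs1 ρ V0 V1 : ℝ) (hσs0 : 0 < σs0) (hσs1 : 0 < σs1)
    (hρ : ρ ∈ Set.Ioo (-1 : ℝ) 1) (hV0 : 0 < V0) (hV01 : V0 ≤ V1)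
    (S : Set (ℝ × ℝ))
    (hS : S = {b : ℝ × ℝ | ∃ σ2 : ℝ, 0 ≤ σ2 ∧
      (1 - ρ ^ 2) * σs1 ^ 2 * b.1 ^ 2 = V0 - σ2 ∧
      (1 - ρ ^ 2) * σs0 ^ 2 * b.2 ^ 2 = V1 - σ2}) :
    S = {b : ℝ × ℝ |
        b.1 ^ 2 ≤ V0 / ((1 - ρ ^ 2) * σs1 ^ 2) ∧
        (V1 - V0) / ((1 - ρ ^ 2) * σs0 ^ 2) ≤ b.2 ^ 2 ∧
        b.2 ^ 2 ≤ V1 / ((1 - ρ ^ 2) * σs0 ^ 2) ∧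
        σs0 ^ 2 * b.2 ^ 2 - σs1 ^ 2 * b.1 ^ 2 = (V1 - V0) / (1 - ρ ^ 2)} ∧
    {b01 : ℝ | ∃ b10 : ℝ, (b01, b10) ∈ S} =
      Set.Icc (-Real.sqrt (V0 / ((1 - ρ ^ 2) * σs1 ^ 2)))
        (Real.sqrt (V0 / ((1 - ρ ^ 2) * σs1 ^ 2))) ∧
    {b10 : ℝ | ∃ b01 : ℝ, (b01, b10) ∈ S} =
      Set.Icc (-Real.sqrt (V1 / ((1 - ρ ^ 2) * σs0 ^ 2)))
          (-Real.sqrt ((V1 - V0) / ((1 - ρ ^ 2) * σs0 ^ 2))) ∪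
        Set.Icc (Real.sqrt ((V1 - V0) / ((1 - ρ ^ 2) * σs0 ^ 2)))
          (Real.sqrt (V1 / ((1 - ρ ^ 2) * σs0 ^ 2))) := by
  have hc : 0 < 1 - ρ ^ 2 := sub_pos.2 ((sq_lt_one_iff_abs_lt_one ρ).2 (abs_lt.2 hρ))
  have ha : 0 < (1 - ρ ^ 2) * σs1 ^ 2 := by positivity
  have hb : 0 < (1 - ρ ^ 2) * σs0 ^ 2 := by positivity
  change S = identificationRegion ((1 - ρ ^ 2) * σs1 ^ 2) ((1 - ρ ^ 2) * σs0 ^ 2) V0 V1 at hS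
  subst hS
  exact ⟨identificationRegion_mul_mul hc (pow_pos hσs1 2) (pow_pos hσs0 2),
    setOf_exists_mk_mem_identificationRegion_left ha hb hV0.le hV01,
    setOf_exists_mk_mem_identificationRegion_right ha hb (hV0.le.trans hV01)⟩
end

section
/- Let σ_{s0} > 0, σ_{s1} > 0, ρ ∈ (−1, 1), and let V_0, V_1 be real numbers with 0 < V_0 ≤ V_1. Define S = { (b_{01}, b_{10}) ∈ ℝ² : there exists σ² ≥ 0 with (1 − ρ²)σ_{s1}² b_{01}² = V_0 − σ² and (1 − ρ²)σ_{s0}² b_{10}² = V_1 − σ² }. Then { (b_{01}, b_{10}) ∈ S : b_{01} ≥ 0 and b_{10} ≥ 0 } = { (b_{01}, b_{10}) ∈ ℝ² : 0 ≤ b_{01} ≤ √(V_0/((1 − ρ²)σ_{s1}²)), √((V_1 − V_0)/((1 − ρ²)σ_{s0}²)) ≤ b_{10} ≤ √(V_1/((1 − ρ²)σ_{s0}²)), and σ_{s0}²b_{10}² − σ_{s1}²b_{01}² = (V_1 − V_0)/(1 − ρ²) }. -/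
/-!
Eliminating the residual variance `σ2` from the two equations leaves their difference together with
`σ2 ≥ 0`, which is the upper bound on the first coordinate. The first equation also forces
`σ2 ≤ V0`, so the second one confines the square of the second coordinate, suitably scaled, to
`[V1 - V0, V1]`.
-/

theorem exists_nonneg_eq_sub_and_eq_sub_iff {G : Type*} [AddCommGroup G] [PartialOrder G]
    [IsOrderedAddMonoid G] {u v s t : G} :
    (∃ r, 0 ≤ r ∧ u = s - r ∧ v = t - r) ↔ u ≤ s ∧ v - u = t - s := by
  constructor
  · rintro ⟨r, hr, rfl, rfl⟩
    exact ⟨sub_le_self s hr, sub_sub_sub_cancel_right t s r⟩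
  · rintro ⟨hus, hvu⟩
    refine ⟨s - u, sub_nonneg.2 hus, (sub_sub_cancel s u).symm, ?_⟩
    calc v = v - u + u := (sub_add_cancel v u).symm
      _ = t - s + u := by rw [hvu]
      _ = t - (s - u) := by abel

theorem le_sqrt_div_iff_mul_sq_le {a v x : ℝ} (ha : 0 < a) (hv : 0 ≤ v) (hx : 0 ≤ x) :
    x ≤ √(v / a) ↔ a * x ^ 2 ≤ v := by
  rw [Real.le_sqrt hx (div_nonneg hv ha.le), le_div_iff₀' ha]

theorem sqrt_div_le_iff_le_mul_sq {a v x : ℝ} (ha : 0 < a) (hx : 0 ≤ x) :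
    √(v / a) ≤ x ↔ v ≤ a * x ^ 2 := by
  rw [Real.sqrt_le_left hx, div_le_iff₀' ha]

/-- The partial identification region of `(β01, β10)`: the coefficients compatible with the
identifiable variances `V0`, `V1` for some residual variance `σ2 ≥ 0`. The identifiable scale
factors `(1 - ρ²) σs1²` and `(1 - ρ²) σs0²` are abbreviated to `a` and `b`. -/
def partialIdentRegion (a b V0 V1 : ℝ) : Set (ℝ × ℝ) :=
  {p | ∃ σ2 : ℝ, 0 ≤ σ2 ∧ a * p.1 ^ 2 = V0 - σ2 ∧ b * p.2 ^ 2 = V1 - σ2}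

section partialIdentRegion

variable {a b V0 V1 : ℝ} {p : ℝ × ℝ}

theorem mem_partialIdentRegion_iff :
    p ∈ partialIdentRegion a b V0 V1 ↔
      a * p.1 ^ 2 ≤ V0 ∧ b * p.2 ^ 2 - a * p.1 ^ 2 = V1 - V0 :=
  exists_nonneg_eq_sub_and_eq_sub_iff

theorem mul_snd_sq_mem_Icc_of_mem_partialIdentRegion (ha : 0 ≤ a)
    (hp : p ∈ partialIdentRegion a b V0 V1) : b * p.2 ^ 2 ∈ Set.Icc (V1 - V0) V1 := by
  obtain ⟨hfst, hdiff⟩ := mem_partialIdentRegion_iff.1 hp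
  have hfst_nonneg : 0 ≤ a * p.1 ^ 2 := mul_nonneg ha (sq_nonneg p.1)
  constructor <;> linarith

theorem mem_partialIdentRegion_and_nonneg_iff (ha : 0 < a) (hb : 0 < b) (hV0 : 0 ≤ V0)
    (hV01 : V0 ≤ V1) :
    (p ∈ partialIdentRegion a b V0 V1 ∧ 0 ≤ p.1 ∧ 0 ≤ p.2) ↔
      0 ≤ p.1 ∧ p.1 ≤ √(V0 / a) ∧ √((V1 - V0) / b) ≤ p.2 ∧ p.2 ≤ √(V1 / b) ∧
        b * p.2 ^ 2 - a * p.1 ^ 2 = V1 - V0 := by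
  constructor
  · rintro ⟨hp, hfst, hsnd⟩
    obtain ⟨hle, hdiff⟩ := mem_partialIdentRegion_iff.1 hp
    obtain ⟨hlower, hupper⟩ := mul_snd_sq_mem_Icc_of_mem_partialIdentRegion ha.le hp
    exact ⟨hfst, (le_sqrt_div_iff_mul_sq_le ha hV0 hfst).2 hle,
      (sqrt_div_le_iff_le_mul_sq hb hsnd).2 hlower,
      (le_sqrt_div_iff_mul_sq_le hb (hV0.trans hV01) hsnd).2 hupper, hdiff⟩
  · rintro ⟨hfst, hle, hlower, -, hdiff⟩
    exact ⟨mem_partialIdentRegion_iff.2 ⟨(le_sqrt_div_iff_mul_sq_le ha hV0 hfst).1 hle, hdiff⟩,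
      hfst, (Real.sqrt_nonneg _).trans hlower⟩

end partialIdentRegion

/-- Proposition 2: under the Same Sign assumption (restricting to
`b01 ≥ 0` and `b10 ≥ 0`), the partial identification region of `(β01, β10)`. -/
theorem stmt6 (σs0 σs1 ρ V0 V1 : ℝ) (hσs0 : 0 < σs0) (hσs1 : 0 < σs1)
    (hρ : ρ ∈ Set.Ioo (-1 : ℝ) 1) (hV0 : 0 < V0) (hV01 : V0 ≤ V1)
    (S : Set (ℝ × ℝ))
    (hS : S = {b : ℝ × ℝ | ∃ σ2 : ℝ, 0 ≤ σ2 ∧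
      (1 - ρ ^ 2) * σs1 ^ 2 * b.1 ^ 2 = V0 - σ2 ∧
      (1 - ρ ^ 2) * σs0 ^ 2 * b.2 ^ 2 = V1 - σ2}) :
    {b ∈ S | 0 ≤ b.1 ∧ 0 ≤ b.2} =
      {b : ℝ × ℝ |
        0 ≤ b.1 ∧ b.1 ≤ Real.sqrt (V0 / ((1 - ρ ^ 2) * σs1 ^ 2)) ∧
        Real.sqrt ((V1 - V0) / ((1 - ρ ^ 2) * σs0 ^ 2)) ≤ b.2 ∧
        b.2 ≤ Real.sqrt (V1 / ((1 - ρ ^ 2) * σs0 ^ 2)) ∧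
        σs0 ^ 2 * b.2 ^ 2 - σs1 ^ 2 * b.1 ^ 2 = (V1 - V0) / (1 - ρ ^ 2)} := by
  have hc : 0 < 1 - ρ ^ 2 := sub_pos.2 ((sq_lt_one_iff_abs_lt_one ρ).2 (abs_lt.2 hρ))
  have ha : 0 < (1 - ρ ^ 2) * σs1 ^ 2 := by positivity
  have hb : 0 < (1 - ρ ^ 2) * σs0 ^ 2 := by positivity
  obtain rfl : S = partialIdentRegion ((1 - ρ ^ 2) * σs1 ^ 2) ((1 - ρ ^ 2) * σs0 ^ 2) V0 V1 := hS
  ext p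
  have hdiff : σs0 ^ 2 * p.2 ^ 2 - σs1 ^ 2 * p.1 ^ 2 = (V1 - V0) / (1 - ρ ^ 2) ↔
      (1 - ρ ^ 2) * σs0 ^ 2 * p.2 ^ 2 - (1 - ρ ^ 2) * σs1 ^ 2 * p.1 ^ 2 = V1 - V0 := by
    rw [eq_div_iff hc.ne', mul_comm, mul_sub, ← mul_assoc, ← mul_assoc]
  simp only [Set.mem_ofPred_eq, hdiff]
  exact mem_partialIdentRegion_and_nonneg_iff ha hb hV0.le hV01
end

section
/- Let σ_{s0} > 0, σ_{s1} > 0, ρ ∈ (−1, 1), and let V_0, V_1, ζ_0, ζ_1 be real numbers with 0 < V_0 ≤ V_1, V_0 ≤ ζ_0, V_1 ≤ ζ_1, and V_0²/ζ_0 ≥ V_1²/ζ_1. Define S_dom = { (b_{01}, b_{10}) ∈ ℝ² : there exists σ² with σ² ≥ V_0²/ζ_0, σ² ≥ V_1²/ζ_1, (1 − ρ²)σ_{s1}² b_{01}² = V_0 − σ², and (1 − ρ²)σ_{s0}² b_{10}² = V_1 − σ² }. Then S_dom = { (b_{01}, b_{10}) ∈ ℝ² : b_{01}² ≤ V_0(ζ_0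 − V_0)/(ζ_0(1 − ρ²)σ_{s1}²), (V_1 − V_0)/((1 − ρ²)σ_{s0}²) ≤ b_{10}² ≤ (V_1 − V_0²/ζ_0)/((1 − ρ²)σ_{s0}²), and σ_{s0}²b_{10}² − σ_{s1}²b_{01}² = (V_1 − V_0)/(1 − ρ²) }. -/
/-!
The first variance equation determines `σ²`, so eliminating it leaves an upper bound on `β01²` and
the difference of the two equations. That difference makes `β10²` an increasing affine function of
`β01²`, so `0 ≤ β01²` becomes the lower bound on `β10²` and the upper bound on `β01²` becomes the
upper bound on `β10²`.
-/

section Elimination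

variable {G : Type*} [AddCommGroup G] [PartialOrder G] [IsOrderedAddMonoid G] {m u v x y : G}

lemma exists_le_and_eq_sub_and_eq_sub_iff :
    (∃ s, m ≤ s ∧ x = u - s ∧ y = v - s) ↔ x ≤ u - m ∧ y - x = v - u := by
  constructor
  · rintro ⟨s, hs, rfl, rfl⟩
    exact ⟨sub_le_sub_left hs u, sub_sub_sub_cancel_right v u s⟩
  · rintro ⟨hx, hyx⟩
    refine ⟨u - x, le_sub_comm.mp hx, (sub_sub_cancel u x).symm, ?_⟩
    rw [← sub_add, ← hyx, sub_add_cancel]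

lemma le_sub_iff_le_sub_of_sub_eq_sub (h : y - x = v - u) : x ≤ u - m ↔ y ≤ v - m := by
  have hy : y = x + (v - u) := sub_eq_iff_eq_add'.mp h
  have hv : v - m = u - m + (v - u) := by abel
  rw [hy, hv, add_le_add_iff_right]

lemma exists_le_and_eq_sub_and_eq_sub_iff_of_nonneg (hx : 0 ≤ x) :
    (∃ s, m ≤ s ∧ x = u - s ∧ y = v - s) ↔
      x ≤ u - m ∧ v - u ≤ y ∧ y ≤ v - m ∧ y - x = v - u := by
  rw [exists_le_and_eq_sub_and_eq_sub_iff]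
  constructor
  · rintro ⟨hxm, hyx⟩
    exact ⟨hxm, hyx ▸ sub_le_self y hx, (le_sub_iff_le_sub_of_sub_eq_sub hyx).mp hxm, hyx⟩
  · rintro ⟨hxm, -, -, hyx⟩
    exact ⟨hxm, hyx⟩

end Elimination

lemma mul_sub_div_eq_sub_sq_div {K : Type*} [Field K] {z : K} (hz : z ≠ 0) (v : K) :
    v * (z - v) / z = v - v ^ 2 / z := by
  field_simp

theorem stmt7_general {K : Type*} [Field K] [LinearOrder K] [IsStrictOrderedRing K]
    {σs0 σs1 ρ : K} (hσs0 : σs0 ≠ 0) (hσs1 : σs1 ≠ 0) (hρ : ρ ^ 2 < 1) (V0 V1 m0 m1 : K) :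
    {b : K × K | ∃ σ2 : K, m0 ≤ σ2 ∧ m1 ≤ σ2 ∧
      (1 - ρ ^ 2) * σs1 ^ 2 * b.1 ^ 2 = V0 - σ2 ∧
      (1 - ρ ^ 2) * σs0 ^ 2 * b.2 ^ 2 = V1 - σ2} =
    {b : K × K |
      b.1 ^ 2 ≤ (V0 - max m0 m1) / ((1 - ρ ^ 2) * σs1 ^ 2) ∧
      (V1 - V0) / ((1 - ρ ^ 2) * σs0 ^ 2) ≤ b.2 ^ 2 ∧
      b.2 ^ 2 ≤ (V1 - max m0 m1) / ((1 - ρ ^ 2) * σs0 ^ 2) ∧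
      σs0 ^ 2 * b.2 ^ 2 - σs1 ^ 2 * b.1 ^ 2 = (V1 - V0) / (1 - ρ ^ 2)} := by
  have hr : 0 < 1 - ρ ^ 2 := sub_pos.mpr hρ
  have h0 : 0 < (1 - ρ ^ 2) * σs0 ^ 2 := by positivity
  have h1 : 0 < (1 - ρ ^ 2) * σs1 ^ 2 := by positivity
  ext b
  have hb : 0 ≤ (1 - ρ ^ 2) * σs1 ^ 2 * b.1 ^ 2 := by positivity
  have hdiff : (σs0 ^ 2 * b.2 ^ 2 - σs1 ^ 2 * b.1 ^ 2) * (1 - ρ ^ 2) =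
      (1 - ρ ^ 2) * σs0 ^ 2 * b.2 ^ 2 - (1 - ρ ^ 2) * σs1 ^ 2 * b.1 ^ 2 := by ring
  have helim := exists_le_and_eq_sub_and_eq_sub_iff_of_nonneg (m := max m0 m1) (u := V0)
    (v := V1) (y := (1 - ρ ^ 2) * σs0 ^ 2 * b.2 ^ 2) hb
  simp only [max_le_iff, and_assoc] at helim
  simp only [Set.mem_ofPred_eq]
  rw [helim, le_div_iff₀' h1, div_le_iff₀' h0, le_div_iff₀' h0, eq_div_iff hr.ne', hdiff]

/-- Proposition 3: under the Dominant Observed Effect assumption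
(`σ² ≥ V_t²/ζ_t` for `t = 0, 1`), the partial identification region of `(β01, β10)`. -/
theorem stmt7 (σs0 σs1 ρ V0 V1 ζ0 ζ1 : ℝ) (hσs0 : 0 < σs0) (hσs1 : 0 < σs1)
    (hρ : ρ ∈ Set.Ioo (-1 : ℝ) 1) (hV0 : 0 < V0) (hV01 : V0 ≤ V1)
    (hV0ζ0 : V0 ≤ ζ0) (hV1ζ1 : V1 ≤ ζ1)
    (hdom : V1 ^ 2 / ζ1 ≤ V0 ^ 2 / ζ0)
    (Sdom : Set (ℝ × ℝ))
    (hSdom : Sdom = {b : ℝ × ℝ | ∃ σ2 : ℝ,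
      V0 ^ 2 / ζ0 ≤ σ2 ∧ V1 ^ 2 / ζ1 ≤ σ2 ∧
      (1 - ρ ^ 2) * σs1 ^ 2 * b.1 ^ 2 = V0 - σ2 ∧
      (1 - ρ ^ 2) * σs0 ^ 2 * b.2 ^ 2 = V1 - σ2}) :
    Sdom = {b : ℝ × ℝ |
      b.1 ^ 2 ≤ V0 * (ζ0 - V0) / (ζ0 * (1 - ρ ^ 2) * σs1 ^ 2) ∧
      (V1 - V0) / ((1 - ρ ^ 2) * σs0 ^ 2) ≤ b.2 ^ 2 ∧
      b.2 ^ 2 ≤ (V1 - V0 ^ 2 / ζ0) / ((1 - ρ ^ 2) * σs0 ^ 2) ∧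
      σs0 ^ 2 * b.2 ^ 2 - σs1 ^ 2 * b.1 ^ 2 = (V1 - V0) / (1 - ρ ^ 2)} := by
  have hζ0 : ζ0 ≠ 0 := (hV0.trans_le hV0ζ0).ne'
  have hρ_sq : ρ ^ 2 < 1 := (sq_lt_one_iff_abs_lt_one ρ).mpr (abs_lt.mpr hρ)
  rw [hSdom, stmt7_general hσs0.ne' hσs1.ne' hρ_sq, max_eq_left hdom, mul_assoc ζ0,
    ← div_div _ ζ0, mul_sub_div_eq_sub_sq_div hζ0]
end

section
/- Let (Ω, F, P) be a probability space and let S : Ω → ℝ, X : Ω → ℝ^p, Z : Ω → ℝ, ε : Ω → ℝ be measurable, with ε independent of the triple (S, X, Z). Let M, N : ℝ × ℝ^p × ℝ → ℝ be measurable maps satisfying N(s, x, M(s, x, z)) = z and M(s, x, N(s, x, z)) = z for all (s, x, z), and suppose the pushforward of the law of (S, X, Z) under the map (s, x, z) ↦ (s, x, M(s, x, z)) equals the law of (S, X, Z). Let f : ℝ^p × ℝ × ℝ → ℝ be measurable and define Y = f(X, S, Z) + ε and Y' = f(X, S, N(S, X, Z)) + ε. Then the law of (Y', S, X) equals the law of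 (Y, S, X). -/
open MeasureTheory ProbabilityTheory

/-! An a.e. left inverse of a transformation that preserves the law of `T = (S, X, Z)` preserves
that law too. So `(S, X, N (S, X, Z))` is distributed as `(S, X, Z)`, and being a function of `T` it
is still independent of `ε`; hence it has the same joint law with `ε`, and `(Y', S, X)` and
`(Y, S, X)` are the images of these two joint laws under one and the same map. -/

section IdentDistrib

variable {Ω α β : Type*} [MeasurableSpace Ω] [MeasurableSpace α] [MeasurableSpace β]
  {P : Measure Ω} {U : Ω → α} {T : Ω → β} {g h : β → β}

theorem identDistrib_comp_of_ae_leftInverse (hinv : IdentDistrib (g ∘ T) T P P)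
    (hh : Measurable h) (hhg : h ∘ g ∘ T =ᵐ[P] T) : IdentDistrib (h ∘ T) T P P :=
  have apply_h : IdentDistrib (h ∘ g ∘ T) (h ∘ T) P P := hinv.comp hh
  apply_h.symm.trans (.of_ae_eq apply_h.aemeasurable_fst hhg)

theorem identDistrib_prodMk_comp_of_indepFun [IsFiniteMeasure P] (hU : AEMeasurable U P)
    (hind : IndepFun U T P) (hh : Measurable h) (hinv : IdentDistrib (h ∘ T) T P P) :
    IdentDistrib (fun ω => (U ω, h (T ω))) (fun ω => (U ω, T ω)) P P :=
  (IdentDistrib.refl hU).prodMk hinv (hind.comp measurable_id hh) hind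

end IdentDistrib

theorem stmt11_general {Ω 𝓢 𝓧 𝓩 𝓔 𝓨 : Type*} [MeasurableSpace Ω] [MeasurableSpace 𝓢]
    [MeasurableSpace 𝓧] [MeasurableSpace 𝓩] [MeasurableSpace 𝓔] [MeasurableSpace 𝓨]
    {P : Measure Ω} [IsFiniteMeasure P]
    {S : Ω → 𝓢} {X : Ω → 𝓧} {Z : Ω → 𝓩} {ε : Ω → 𝓔} (hε : AEMeasurable ε P)
    (hind : IndepFun ε (fun ω => (S ω, X ω, Z ω)) P)
    {M N : 𝓢 × 𝓧 × 𝓩 → 𝓩} (hN : Measurable N)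
    (hNM : ∀ᵐ ω ∂P, N (S ω, X ω, M (S ω, X ω, Z ω)) = Z ω)
    (hinv : IdentDistrib (fun ω => (S ω, X ω, M (S ω, X ω, Z ω)))
      (fun ω => (S ω, X ω, Z ω)) P P)
    {F : (𝓧 × 𝓢 × 𝓩) × 𝓔 → 𝓨} (hF : Measurable F) :
    IdentDistrib (fun ω => (F ((X ω, S ω, N (S ω, X ω, Z ω)), ε ω), S ω, X ω))
      (fun ω => (F ((X ω, S ω, Z ω), ε ω), S ω, X ω)) P P := by
  let T : Ω → 𝓢 × 𝓧 × 𝓩 := fun ω => (S ω, X ω, Z ω)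
  let g : 𝓢 × 𝓧 × 𝓩 → 𝓢 × 𝓧 × 𝓩 := fun t => (t.1, t.2.1, M t)
  let h : 𝓢 × 𝓧 × 𝓩 → 𝓢 × 𝓧 × 𝓩 := fun t => (t.1, t.2.1, N t)
  have hh : Measurable h := by fun_prop
  have hhg : h ∘ g ∘ T =ᵐ[P] T := by
    filter_upwards [hNM] with ω hω
    simp only [T, g, h, Function.comp_apply, hω]
  have invariant : IdentDistrib (h ∘ T) T P P :=
    identDistrib_comp_of_ae_leftInverse (g := g) hinv hh hhg
  have joint : IdentDistrib (fun ω => (ε ω, h (T ω))) (fun ω => (ε ω, T ω)) P P :=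
    identDistrib_prodMk_comp_of_indepFun hε hind hh invariant
  let observe : 𝓔 × 𝓢 × 𝓧 × 𝓩 → 𝓨 × 𝓢 × 𝓧 :=
    fun q => (F ((q.2.2.1, q.2.1, q.2.2.2), q.1), q.2.1, q.2.2.1)
  have observe_measurable : Measurable observe := by fun_prop
  exact joint.comp observe_measurable

/-- Theorem 3: replacing the unobserved intermediate `Z` by `N(S, X, Z)`
(the inverse of an invariant transformation `M` of the law of `(S, X, Z)`) inside the
outcome model produces the same observed-data law of `(Y, S, X)`. -/
theorem stmt11 {Ω : Type*} [MeasurableSpace Ω] (P : Measure Ω) [IsProbabilityMeasure P]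
    {p : ℕ}
    (S : Ω → ℝ) (X : Ω → (Fin p → ℝ)) (Z : Ω → ℝ) (ε : Ω → ℝ)
    (hS : Measurable S) (hX : Measurable X) (hZ : Measurable Z) (hε : Measurable ε)
    (hind : IndepFun ε (fun ω => (S ω, X ω, Z ω)) P)
    (M N : ℝ × (Fin p → ℝ) × ℝ → ℝ)
    (hM : Measurable M) (hN : Measurable N)
    (hNM : ∀ (s : ℝ) (x : Fin p → ℝ) (z : ℝ), N (s, x, M (s, x, z)) = z)
    (hMN : ∀ (s : ℝ) (x : Fin p → ℝ) (z : ℝ), M (s, x, N (s, x, z)) = z)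
    (hinv : Measure.map (fun ω => (S ω, X ω, M (S ω, X ω, Z ω))) P
      = Measure.map (fun ω => (S ω, X ω, Z ω)) P)
    (f : (Fin p → ℝ) × ℝ × ℝ → ℝ) (hf : Measurable f)
    (Y Y' : Ω → ℝ)
    (hY : ∀ ω, Y ω = f (X ω, S ω, Z ω) + ε ω)
    (hY' : ∀ ω, Y' ω = f (X ω, S ω, N (S ω, X ω, Z ω)) + ε ω) :
    Measure.map (fun ω => (Y' ω, S ω, X ω)) P
      = Measure.map (fun ω => (Y ω, S ω, X ω)) P := by
  simp only [hY, hY']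
  exact (stmt11_general (F := fun q => f q.1 + q.2) hε.aemeasurable hind hN
    (.of_forall fun _ => hNM _ _ _) ⟨by fun_prop, by fun_prop, hinv⟩ (by fun_prop)).map_eq
end

section
/- Let λ_0, β_{00} be real, β_{01} ≠ 0 real, σ > 0, and p_{1·}, p_{·1} ∈ (0, 1). For y ∈ ℝ, s ∈ {0, 1}, and p ∈ [max(0, p_{1·} + p_{·1} − 1), min(p_{1·}, p_{·1})], define f_0(y, s | p) = (1/(√(2π)σ))·exp(−(y − λ_0 − β_{00}s)²/(2σ²))·[ (1 − p_{1·} − p_{·1} + p)^{1−s}(p_{1·} − p)^{s} + exp(−(β_{01}² − 2β_{01}(y − λ_0 − β_{00}s))/(2σ²))·(p_{·1} − p)^{1−s} p^{s} ]. If p and p' both lie in [max(0, p_{1·} + p_{·1} − 1), min(p_{1·}, p_{·1})] and f_0(y, s | p) = f_0(y, s | p') for all y ∈ ℝ and s ∈ {0, 1}, then p = p'. -/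
/-!
For `s = 1` the density is the two-component mixture `(p1 - p) φ₁ + p φ₂`, where `φ₁`, `φ₂` are
Gaussian densities with common variance `σ²` and means `λ₀ + β₀₀`, `λ₀ + β₀₀ + β₀₁`. It is affine
in `p` with slope `φ₂ - φ₁`, which at a given `y` vanishes only if `y` is the midpoint of the two
means. Hence the value at any one other point already determines `p`.
-/

section

open ProbabilityTheory Real
open scoped NNReal

theorem injective_sub_mul_add_mul {R : Type*} [CommRing R] [NoZeroDivisors R] {u v : R}
    (huv : u ≠ v) (a : R) : Function.Injective fun p ↦ (a - p) * u + p * v := by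
  intro p q hpq
  have hslope : p * (v - u) = q * (v - u) := by linear_combination hpq
  exact mul_right_cancel₀ (sub_ne_zero.mpr huv.symm) hslope

theorem gaussianPDFReal_mean_add (μ δ : ℝ) (v : ℝ≥0) (x : ℝ) :
    gaussianPDFReal (μ + δ) v x =
      exp (-(δ ^ 2 - 2 * δ * (x - μ)) / (2 * v)) * gaussianPDFReal μ v x := by
  have hexp : -(x - (μ + δ)) ^ 2 / (2 * v) =
      -(δ ^ 2 - 2 * δ * (x - μ)) / (2 * v) + -(x - μ) ^ 2 / (2 * v) := by ring
  rw [gaussianPDFReal, gaussianPDFReal, hexp, exp_add, mul_left_comm]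

theorem gaussianPDFReal_mean_add_eq_iff {μ δ x : ℝ} {v : ℝ≥0} (hδ : δ ≠ 0) (hv : v ≠ 0) :
    gaussianPDFReal (μ + δ) v x = gaussianPDFReal μ v x ↔ x = μ + δ / 2 := by
  have hexponent : -(δ ^ 2 - 2 * δ * (x - μ)) / (2 * v) = δ / v * (x - (μ + δ / 2)) := by
    field_simp
    ring
  have hδv : δ / v ≠ 0 := div_ne_zero hδ (NNReal.coe_ne_zero.mpr hv)
  rw [gaussianPDFReal_mean_add, mul_eq_right₀ (gaussianPDFReal_pos μ v x hv).ne', exp_eq_one_iff,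
    hexponent, mul_eq_zero_iff_left hδv, sub_eq_zero]

/-- The joint density `f₀(y, s | p)` of the observed outcome and intermediate variable in the
control arm, where `p1 = p_{1·}`, `p2 = p_{·1}` and `p = p₁₁`. The indicator `s` is real, so that
it can serve both as a regressor and as an exponent; only `s = 0` and `s = 1` are meaningful. -/
noncomputable def controlDensity (lam0 β00 β01 σ p1 p2 y s p : ℝ) : ℝ :=
  (1 / (√(2 * π) * σ)) * exp (-(y - lam0 - β00 * s) ^ 2 / (2 * σ ^ 2)) *
    ((1 - p1 - p2 + p) ^ (1 - s) * (p1 - p) ^ s +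
      exp (-(β01 ^ 2 - 2 * β01 * (y - lam0 - β00 * s)) / (2 * σ ^ 2)) *
        (p2 - p) ^ (1 - s) * p ^ s)

theorem controlDensity_one (lam0 β00 β01 p1 p2 y p : ℝ) (σ : ℝ≥0) :
    controlDensity lam0 β00 β01 σ p1 p2 y 1 p =
      (p1 - p) * gaussianPDFReal (lam0 + β00) (σ ^ 2) y +
        p * gaussianPDFReal (lam0 + β00 + β01) (σ ^ 2) y := by
  have hnorm : √(2 * π * (σ : ℝ) ^ 2) = √(2 * π) * σ := by
    rw [sqrt_mul (by positivity), sqrt_sq σ.coe_nonneg]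
  rw [gaussianPDFReal_mean_add _ β01]
  simp only [gaussianPDFReal, controlDensity, NNReal.coe_pow, hnorm, mul_one, sub_self, rpow_zero,
    rpow_one, sub_sub]
  ring

theorem stmt12_general {lam0 β00 β01 σ y : ℝ} (hβ : β01 ≠ 0) (hσ : 0 < σ)
    (hy : y ≠ lam0 + β00 + β01 / 2) (p1 p2 : ℝ) :
    Function.Injective (controlDensity lam0 β00 β01 σ p1 p2 y 1) := by
  lift σ to ℝ≥0 using hσ.le
  have hv : σ ^ 2 ≠ 0 := pow_ne_zero 2 (NNReal.coe_pos.mp hσ).ne'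
  have hpdf : gaussianPDFReal (lam0 + β00 + β01) (σ ^ 2) y ≠
      gaussianPDFReal (lam0 + β00) (σ ^ 2) y :=
    (gaussianPDFReal_mean_add_eq_iff hβ hv).not.mpr hy
  have hmix := funext fun p ↦ controlDensity_one lam0 β00 β01 p1 p2 y p σ
  exact hmix ▸ injective_sub_mul_add_mul hpdf.symm p1

end

/-- in the binary-intermediate model, when principal ignorability fails in the
control arm (`β01 ≠ 0`), the control-arm observed-data density `f0(·, · | p)` determines the
association parameter `p = p11` within the Fréchet interval. -/
theorem stmt12 (lam0 β00 β01 σ p1 p2 : ℝ) (hβ : β01 ≠ 0) (hσ : 0 < σ)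
    (hp1 : p1 ∈ Set.Ioo (0 : ℝ) 1) (hp2 : p2 ∈ Set.Ioo (0 : ℝ) 1)
    (f0 : ℝ → ℝ → ℝ → ℝ)
    (hf0 : ∀ y s p, f0 y s p =
      (1 / (Real.sqrt (2 * Real.pi) * σ)) *
        Real.exp (-(y - lam0 - β00 * s) ^ 2 / (2 * σ ^ 2)) *
        ((1 - p1 - p2 + p) ^ ((1 : ℝ) - s) * (p1 - p) ^ (s : ℝ) +
          Real.exp (-(β01 ^ 2 - 2 * β01 * (y - lam0 - β00 * s)) / (2 * σ ^ 2)) *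
            (p2 - p) ^ ((1 : ℝ) - s) * p ^ (s : ℝ)))
    (p p' : ℝ)
    (hp : p ∈ Set.Icc (max 0 (p1 + p2 - 1)) (min p1 p2))
    (hp' : p' ∈ Set.Icc (max 0 (p1 + p2 - 1)) (min p1 p2))
    (heq : ∀ y : ℝ, ∀ s ∈ ({0, 1} : Set ℝ), f0 y s p = f0 y s p') :
    p = p' := by
  obtain rfl : f0 = controlDensity lam0 β00 β01 σ p1 p2 := by ext y s p; exact hf0 y s p
  exact stmt12_general hβ hσ (by simpa using hβ) p1 p2 (heq (lam0 + β00) 1 (by simp))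
end

section
/- Let σ_0, σ_1 > 0 with σ_0 ≠ σ_1, let a_0, a_1 be real numbers, let b_0, b_1 < 0, and let c_0, c_1 > 0. For j ∈ {0, 1} define F_j(y) = (1/(√(2π)σ_j))·exp(−(y − a_j)²/(2σ_j²))·( 1 + c_j·exp(−(b_j² − 2b_j(y − a_j))/(2σ_j²)) ). Then there exists y ∈ ℝ such that F_0(y) ≠ F_1(y). -/
/-!
Completing the square turns `F_j` into the linear combination
`N(a_j, σ_j²) + c_j · N(a_j + b_j, σ_j²)` of Gaussian densities. At `+∞` a Gaussian density is
negligible against any other one of larger variance, or of equal variance and larger mean, so the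
lexicographic order on (variance, mean) is a strict order of growth. In a vanishing linear
combination the fastest growing term would be negligible against itself; hence Gaussian densities
are linearly independent, and only the zero function is a combination of densities of variance
`σ_0²` and also one of densities of variance `σ_1²`.
-/

open Filter Asymptotics ProbabilityTheory
open scoped NNReal

theorem linearIndependent_of_isLittleO {ι α 𝕜 E : Type*} [LinearOrder ι] [NormedField 𝕜]
    [NormedAddCommGroup E] [NormedSpace 𝕜 E] {l : Filter α} {f : ι → α → E}
    (hlt : ∀ ⦃i j⦄, i < j → f i =o[l] f j) (hne : ∀ i, ∃ᶠ x in l, f i x ≠ 0) :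
    LinearIndependent 𝕜 f := by
  rw [linearIndependent_iff]
  intro w hw
  by_contra hw_ne
  have hsupp : w.support.Nonempty := Finsupp.support_nonempty_iff.mpr hw_ne
  set j := w.support.max' hsupp
  have hj : j ∈ w.support := w.support.max'_mem hsupp
  have hrest : (∑ i ∈ w.support.erase j, w i • f i) =o[l] f j :=
    IsLittleO.sum fun i hi =>
      (hlt (w.support.lt_max'_of_mem_erase_max' hsupp hi)).const_smul_left (w i)
  have hlead : w j • f j = -∑ i ∈ w.support.erase j, w i • f i := by
    rw [eq_neg_iff_add_eq_zero, Finset.add_sum_erase _ (fun i => w i • f i) hj]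
    exact hw
  have hself : (w j • f j) =o[l] f j := hlead ▸ hrest.neg_left
  exact isLittleO_irrefl (hne j)
    ((isLittleO_const_smul_left (Finsupp.mem_support_iff.mp hj)).mp hself)

section Gaussian

variable {m m' : ℝ} {v v' : ℝ≥0}

theorem isLittleO_gaussianPDFReal_iff {l : Filter ℝ} (hv : v ≠ 0) (hv' : v' ≠ 0) :
    gaussianPDFReal m v =o[l] gaussianPDFReal m' v' ↔
      Tendsto (fun y => (y - m) ^ 2 / (2 * v) - (y - m') ^ 2 / (2 * v')) l atTop := by
  rw [gaussianPDFReal_def, gaussianPDFReal_def, isLittleO_const_mul_left_iff (by positivity),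
    isLittleO_const_mul_right_iff (by positivity), Real.isLittleO_exp_comp_exp_comp]
  exact tendsto_congr fun y => by ring

theorem isLittleO_gaussianPDFReal_of_var_lt (hv : v ≠ 0) (hlt : v < v') :
    gaussianPDFReal m v =o[atTop] gaussianPDFReal m' v' := by
  have hv' : v' ≠ 0 := hlt.ne_bot
  rw [isLittleO_gaussianPDFReal_iff hv hv']
  have hlead : 0 < 1 / (2 * v : ℝ) - 1 / (2 * v') :=
    sub_pos.mpr (one_div_lt_one_div_of_lt (by positivity) (by gcongr))
  have hslope : Tendsto (fun y : ℝ => (1 / (2 * v) - 1 / (2 * v')) * y + (m' / v' - m / v))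
      atTop atTop :=
    tendsto_atTop_add_const_right _ _ (tendsto_id.const_mul_atTop hlead)
  refine (tendsto_atTop_add_const_right _ (m ^ 2 / (2 * v) - m' ^ 2 / (2 * v'))
    (hslope.atTop_mul_atTop₀ tendsto_id)).congr fun y => ?_
  simp only [id]
  field_simp
  ring

theorem isLittleO_gaussianPDFReal_of_mean_lt (hv : v ≠ 0) (hlt : m < m') :
    gaussianPDFReal m v =o[atTop] gaussianPDFReal m' v := by
  rw [isLittleO_gaussianPDFReal_iff hv hv]
  have hslope : 0 < (m' - m) / v := div_pos (sub_pos.mpr hlt) (by positivity)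
  refine (tendsto_atTop_add_const_right _ ((m ^ 2 - m' ^ 2) / (2 * v))
    (tendsto_id.const_mul_atTop hslope)).congr fun y => ?_
  simp only [id]
  field_simp
  ring

theorem linearIndependent_gaussianPDFReal :
    LinearIndependent ℝ fun p : {v : ℝ≥0 // v ≠ 0} × ℝ => gaussianPDFReal p.2 p.1 := by
  have hlex : LinearIndependent ℝ fun p : {v : ℝ≥0 // v ≠ 0} ×ₗ ℝ =>
      gaussianPDFReal (ofLex p).2 (ofLex p).1 := by
    refine linearIndependent_of_isLittleO (l := atTop) (fun p q hpq => ?_) fun p =>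
      .of_forall fun y => (gaussianPDFReal_pos _ _ y (ofLex p).1.2).ne'
    rcases Prod.Lex.lt_iff.mp hpq with hvar | ⟨hvar, hmean⟩
    · exact isLittleO_gaussianPDFReal_of_var_lt (ofLex p).1.2 hvar
    · rw [← hvar]
      exact isLittleO_gaussianPDFReal_of_mean_lt (ofLex p).1.2 hmean
  exact hlex.comp toLex toLex.injective

/-- The signed finite location mixtures of Gaussian densities with common variance `v`. The weights
are arbitrary reals, so that the mixtures form a vector space. -/
def gaussianLocationMixtures (v : ℝ≥0) : Submodule ℝ (ℝ → ℝ) :=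
  Submodule.span ℝ (Set.range fun m => gaussianPDFReal m v)

theorem gaussianPDFReal_mem_gaussianLocationMixtures (m : ℝ) (v : ℝ≥0) :
    gaussianPDFReal m v ∈ gaussianLocationMixtures v :=
  Submodule.subset_span ⟨m, rfl⟩

theorem disjoint_gaussianLocationMixtures (hv : v ≠ 0) (hv' : v' ≠ 0) (hne : v ≠ v') :
    Disjoint (gaussianLocationMixtures v) (gaussianLocationMixtures v') := by
  have hindices : Disjoint (Set.range fun m : ℝ => ((⟨v, hv⟩ : {v : ℝ≥0 // v ≠ 0}), m))
      (Set.range fun m : ℝ => ((⟨v', hv'⟩ : {v : ℝ≥0 // v ≠ 0}), m)) := by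
    rw [Set.disjoint_range_iff]
    intro m m' h
    exact hne (congrArg (fun p => p.1.1) h)
  have hspans := linearIndependent_gaussianPDFReal.disjoint_span_image hindices
  rwa [← Set.range_comp, ← Set.range_comp] at hspans

end Gaussian

theorem gaussian_mul_one_add_exp_eq {σ : ℝ} (hσ : 0 < σ) (a b c y : ℝ) :
    (1 / (Real.sqrt (2 * Real.pi) * σ)) * Real.exp (-(y - a) ^ 2 / (2 * σ ^ 2)) *
        (1 + c * Real.exp (-(b ^ 2 - 2 * b * (y - a)) / (2 * σ ^ 2))) =
      gaussianPDFReal a (σ.toNNReal ^ 2) y + c * gaussianPDFReal (a + b) (σ.toNNReal ^ 2) y := by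
  have hsqrt : √(2 * Real.pi * σ ^ 2) = √(2 * Real.pi) * σ := by
    rw [Real.sqrt_mul (by positivity), Real.sqrt_sq hσ.le]
  have hexp : Real.exp (-(y - (a + b)) ^ 2 / (2 * σ ^ 2)) =
      Real.exp (-(y - a) ^ 2 / (2 * σ ^ 2)) *
        Real.exp (-(b ^ 2 - 2 * b * (y - a)) / (2 * σ ^ 2)) := by
    rw [← Real.exp_add]
    ring_nf
  simp only [gaussianPDFReal, NNReal.coe_pow, Real.coe_toNNReal σ hσ.le, hsqrt, hexp]
  ring

theorem mem_gaussianLocationMixtures_of_eq_gaussian_mul_one_add_exp {σ a b c : ℝ} (hσ : 0 < σ)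
    {F : ℝ → ℝ}
    (hF : ∀ y, F y = (1 / (Real.sqrt (2 * Real.pi) * σ)) *
      Real.exp (-(y - a) ^ 2 / (2 * σ ^ 2)) *
      (1 + c * Real.exp (-(b ^ 2 - 2 * b * (y - a)) / (2 * σ ^ 2)))) :
    F ∈ gaussianLocationMixtures (σ.toNNReal ^ 2) := by
  have hmix : F = gaussianPDFReal a (σ.toNNReal ^ 2) +
      c • gaussianPDFReal (a + b) (σ.toNNReal ^ 2) :=
    funext fun y => (hF y).trans (gaussian_mul_one_add_exp_eq hσ a b c y)
  rw [hmix]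
  exact add_mem (gaussianPDFReal_mem_gaussianLocationMixtures _ _)
    (Submodule.smul_mem _ c (gaussianPDFReal_mem_gaussianLocationMixtures _ _))

theorem stmt13_general (σ0 σ1 a0 a1 b0 b1 c0 c1 : ℝ)
    (hσ0 : 0 < σ0) (hσ1 : 0 < σ1) (hne : σ0 ≠ σ1)
    (F0 F1 : ℝ → ℝ) (hF0_ne : F0 ≠ 0)
    (hF0 : ∀ y, F0 y = (1 / (Real.sqrt (2 * Real.pi) * σ0)) *
      Real.exp (-(y - a0) ^ 2 / (2 * σ0 ^ 2)) *
      (1 + c0 * Real.exp (-(b0 ^ 2 - 2 * b0 * (y - a0)) / (2 * σ0 ^ 2))))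
    (hF1 : ∀ y, F1 y = (1 / (Real.sqrt (2 * Real.pi) * σ1)) *
      Real.exp (-(y - a1) ^ 2 / (2 * σ1 ^ 2)) *
      (1 + c1 * Real.exp (-(b1 ^ 2 - 2 * b1 * (y - a1)) / (2 * σ1 ^ 2)))) :
    ∃ y : ℝ, F0 y ≠ F1 y := by
  by_contra! heq
  have hmem0 := mem_gaussianLocationMixtures_of_eq_gaussian_mul_one_add_exp hσ0 hF0
  have hmem1 := mem_gaussianLocationMixtures_of_eq_gaussian_mul_one_add_exp hσ1 hF1
  rw [← funext heq] at hmem1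
  have hpos0 : 0 < σ0.toNNReal := Real.toNNReal_pos.mpr hσ0
  have hpos1 : 0 < σ1.toNNReal := Real.toNNReal_pos.mpr hσ1
  have hvar : σ0.toNNReal ^ 2 ≠ σ1.toNNReal ^ 2 := by
    rwa [Ne, pow_left_inj₀ hpos0.le hpos1.le two_ne_zero,
      Real.toNNReal_eq_toNNReal_iff hσ0.le hσ1.le]
  exact hF0_ne (Submodule.disjoint_def.mp
    (disjoint_gaussianLocationMixtures (pow_pos hpos0 2).ne' (pow_pos hpos1 2).ne' hvar)
    F0 hmem0 hmem1)

/-- two binary-intermediate observed-data densities of the displayed form with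
different residual standard deviations `σ0 ≠ σ1` cannot coincide as functions of `y`. -/
theorem stmt13 (σ0 σ1 a0 a1 b0 b1 c0 c1 : ℝ)
    (hσ0 : 0 < σ0) (hσ1 : 0 < σ1) (hne : σ0 ≠ σ1)
    (hb0 : b0 < 0) (hb1 : b1 < 0) (hc0 : 0 < c0) (hc1 : 0 < c1)
    (F0 F1 : ℝ → ℝ)
    (hF0 : ∀ y, F0 y = (1 / (Real.sqrt (2 * Real.pi) * σ0)) *
      Real.exp (-(y - a0) ^ 2 / (2 * σ0 ^ 2)) *
      (1 + c0 * Real.exp (-(b0 ^ 2 - 2 * b0 * (y - a0)) / (2 * σ0 ^ 2))))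
    (hF1 : ∀ y, F1 y = (1 / (Real.sqrt (2 * Real.pi) * σ1)) *
      Real.exp (-(y - a1) ^ 2 / (2 * σ1 ^ 2)) *
      (1 + c1 * Real.exp (-(b1 ^ 2 - 2 * b1 * (y - a1)) / (2 * σ1 ^ 2)))) :
    ∃ y : ℝ, F0 y ≠ F1 y := by
  have hF0_pos : 0 < F0 a0 := by rw [hF0]; positivity
  exact stmt13_general σ0 σ1 a0 a1 b0 b1 c0 c1 hσ0 hσ1 hne F0 F1
    (fun h => hF0_pos.ne' (congrFun h a0)) hF0 hF1
end
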